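/- Let 0 < p < 1 and let ν be the (p, 1−p) Bernoulli product measure on Σ (each coordinate independently equals 0 with probability p and 1 with probability 1−p). If κ is a τ-invariant Borel probability measure on Σ × ℝ̄₊ whose marginal on Σ is ν, then κ = ν × μ for some Borel probability measure μ on ℝ̄₊. -/

import Mathlib

/-!
Write `P` for the Bernoulli measure on `Σ`, `A_n(ω)` for the product of the first `n` linear
coefficients along `ω` (`fibreSlopeProd`) and `T^n_ω` for the `n`-fold fibre map (`orb`), so that
`T^n_ω x = A_n(ω) x + T^n_ω 0` for finite `x`. The conditions `x < ∞` and `x = ∞` define invariant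
sets, and by ergodicity of the shift (Kolmogorov's zero-one law, `ergodic_shiftMap`) each of the
two parts of `κ` has a multiple of `P` as its base marginal (`map_fst_restrict`). This settles the
infinite part, whose fibre coordinate is constant.

On the finite part, `A_n(ω) x → 0` in measure (`tendsto_measure_displacement`), whatever the sign
of the Lyapunov exponent. Since `T^n_ω 0 ≥ 0`, the quantity `A_n(ω) x` is at most `T^n_ω x`, whose
law is independent of `n`, so it is tight. On the other hand `log A_n` is a random walk with two
distinct step values, hence leaves every bounded interval in probability
(`tendsto_measure_walk_bounded`): its characteristic function is `φ(t)^n` with `|φ(t)| < 1` for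
almost every `t`, and averaging it over a Gaussian `t` gives `𝔼 exp (-(log A_n)² / 2) → 0`. Thus
`A_n` can only go to `0`.

By invariance, `∫ 1_S(ω) exp(i t x) dκ = ∫ 1_S(σ^n ω) exp(i t T^n_ω x) dκ`. Replacing `T^n_ω x` by
`T^n_ω 0` costs `o(1)`, and `T^n_ω 0` depends only on the first `n` coordinates, so it is
independent of `σ^n ω`. Hence the integral factors as `P(S) ∫ exp(i t x) dκ`
(`integral_indicator_character`), and uniqueness of characteristic functions gives the product
structure.
-/

open MeasureTheory Filter
open scoped ENNReal

/-- The generators `T₀(x) = a·x`, `T₁(x) = b·x + 1`, extended to the one-point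
compactification `ℝ̄₊ = [0,∞]` (modelled by `ℝ≥0∞`) by `T₀(∞) = T₁(∞) = ∞`. -/
noncomputable def Tmap (a b : ℝ) (i : Bool) (x : ℝ≥0∞) : ℝ≥0∞ :=
  if i then ENNReal.ofReal b * x + 1 else ENNReal.ofReal a * x

/-- The one-sided full shift `σ` on `Σ = {0,1}^{ℕ₀}`. -/
def shiftMap (ω : ℕ → Bool) : ℕ → Bool := fun i => ω (i + 1)

/-- The skew product `τ(ω̄, x) = (σ(ω̄), T_{ω̄₀}(x))` on `X = Σ × ℝ̄₊`. -/
noncomputable def skewMap (a b : ℝ) (z : (ℕ → Bool) × ℝ≥0∞) : (ℕ → Bool) × ℝ≥0∞ :=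
  (shiftMap z.1, Tmap a b (z.1 0) z.2)

/-- A Borel probability measure `μ` on `ℝ̄₊` with `μ({∞}) = 0` is *invariant for*
`(T₀, T₁, ν)` if there is a `τ`-invariant Borel probability measure `κ` on `Σ × ℝ̄₊`
whose marginal on `Σ` is `ν` and whose marginal on `ℝ̄₊` is `μ`. -/
def IsInvariantFor (a b : ℝ) (ν : Measure (ℕ → Bool)) (μ : Measure ℝ≥0∞) : Prop :=
  IsProbabilityMeasure μ ∧ μ {⊤} = 0 ∧
    ∃ κ : Measure ((ℕ → Bool) × ℝ≥0∞), IsProbabilityMeasure κ ∧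
      MeasurePreserving (skewMap a b) κ κ ∧
      κ.map Prod.fst = ν ∧ κ.map Prod.snd = μ

/-- The Lyapunov exponent `λ(ν) = ν(C₀)·ln a + ν(C₁)·ln b` of a shift-invariant
measure `ν` on `Σ`, where `Cᵢ = {ω̄ : ω̄₀ = i}`. -/
noncomputable def lyap (a b : ℝ) (ν : Measure (ℕ → Bool)) : ℝ :=
  (ν {ω | ω 0 = false}).toReal * Real.log a + (ν {ω | ω 0 = true}).toReal * Real.log b

open ProbabilityTheory Topology

/-! ### The Bernoulli shift -/

/-- The `(p, 1 - p)` law of a single coordinate. -/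
noncomputable def coin (p : ℝ) : Measure Bool :=
  ENNReal.ofReal p • Measure.dirac false + ENNReal.ofReal (1 - p) • Measure.dirac true

lemma coin_singleton (p : ℝ) (i : Bool) :
    coin p {i} = if i then ENNReal.ofReal (1 - p) else ENNReal.ofReal p := by
  cases i <;> simp [coin]

lemma isProbabilityMeasure_coin {p : ℝ} (hp0 : 0 < p) (hp1 : p < 1) :
    IsProbabilityMeasure (coin p) := by
  constructor
  simp only [coin, Measure.coe_add, Measure.coe_smul, Pi.add_apply, Pi.smul_apply,
    measure_univ, smul_eq_mul, mul_one]
  rw [← ENNReal.ofReal_add hp0.le (by linarith)]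
  simp

/-- The probabilities of initial cylinders determine the measure. -/
lemma eq_infinitePi_coin {p : ℝ} [IsProbabilityMeasure (coin p)]
    (ν : Measure (ℕ → Bool))
    (hν : ∀ (n : ℕ) (w : Fin n → Bool),
      ν {ωb : ℕ → Bool | ∀ i : Fin n, ωb ↑i = w i} =
        ∏ i : Fin n, (if w i then ENNReal.ofReal (1 - p) else ENNReal.ofReal p)) :
    ν = Measure.infinitePi (fun _ : ℕ => coin p) := by
  set P := Measure.infinitePi (fun _ : ℕ => coin p) with hP
  have hPw : ∀ (n : ℕ) (w : Fin n → Bool), P {ωb : ℕ → Bool | ∀ i : Fin n, ωb ↑i = w i} =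
        ∏ i : Fin n, (if w i then ENNReal.ofReal (1 - p) else ENNReal.ofReal p) := by
    intro n w
    have h := Measure.infinitePi_pi (fun _ : ℕ => coin p) (s := Finset.range n)
      (t := fun i => if h : i < n then {w ⟨i, h⟩} else Set.univ) (fun _ _ => .of_discrete)
    have e : {ωb : ℕ → Bool | ∀ i : Fin n, ωb ↑i = w i} =
        Set.pi (Finset.range n) (fun i => if h : i < n then {w ⟨i, h⟩} else Set.univ) := by
      ext ω
      simp only [Set.mem_ofPred_eq, Set.mem_pi, Finset.coe_range, Set.mem_Iio]
      constructor
      · intro h i hi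
        simpa [hi] using h ⟨i, hi⟩
      · intro h i
        simpa using h i i.2
    rw [e, hP, h, Finset.prod_range]
    refine Finset.prod_congr rfl fun i _ => ?_
    simp [coin_singleton]
  have hr : ∀ n : ℕ, Measurable (fun (ω : ℕ → Bool) (i : Fin n) => ω i) := fun n => by fun_prop
  have hmap : ∀ n : ℕ, ν.map (fun (ω : ℕ → Bool) (i : Fin n) => ω i) =
      P.map (fun (ω : ℕ → Bool) (i : Fin n) => ω i) := by
    intro n
    refine Measure.ext_of_singleton fun w => ?_
    rw [Measure.map_apply (hr n) (.singleton w), Measure.map_apply (hr n) (.singleton w)]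
    have e : (fun (ω : ℕ → Bool) (i : Fin n) => ω i) ⁻¹' {w} =
        {ωb : ℕ → Bool | ∀ i : Fin n, ωb ↑i = w i} := by
      ext ω; simp [funext_iff]
    rw [e, hν, hPw]
  refine Measure.eq_infinitePi _ fun s t ht => ?_
  rw [← Measure.infinitePi_pi (fun _ : ℕ => coin p) (fun i _ => ht i)]
  obtain ⟨n, hn⟩ : ∃ n, ∀ i ∈ s, i < n := ⟨s.sup id + 1, fun i hi =>
    Nat.lt_succ_of_le (Finset.le_sup (f := id) hi)⟩
  have e : Set.pi (s : Set ℕ) t = (fun (ω : ℕ → Bool) (i : Fin n) => ω i) ⁻¹'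
      {v | ∀ i : Fin n, (i : ℕ) ∈ s → v i ∈ t i} := by
    ext ω
    simp only [Set.mem_pi, SetLike.mem_coe, Set.mem_preimage, Set.mem_ofPred_eq]
    exact ⟨fun h i hi => h i hi, fun h i hi => h ⟨i, hn i hi⟩ hi⟩
  rw [e, ← Measure.map_apply (hr n) .of_discrete, hmap, Measure.map_apply (hr n) .of_discrete]

lemma measurable_shiftMap : Measurable shiftMap := by
  unfold shiftMap; fun_prop

lemma shiftMap_iterate (n : ℕ) (ω : ℕ → Bool) : shiftMap^[n] ω = fun i => ω (n + i) := by
  induction n with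
  | zero => simp
  | succ n ih =>
    rw [Function.iterate_succ_apply', ih]
    funext i
    simp only [shiftMap]
    congr 1; ring

/-- The σ-algebra generated by the `i`-th coordinate. -/
abbrev coordAlg (i : ℕ) : MeasurableSpace (ℕ → Bool) :=
  MeasurableSpace.comap (fun ω => ω i) inferInstance

lemma coordAlg_le (i : ℕ) : coordAlg i ≤ (inferInstance : MeasurableSpace (ℕ → Bool)) :=
  (measurable_pi_apply i).comap_le

lemma measurable_shiftMap_iterate_tail (n : ℕ) :
    Measurable[⨆ i ∈ Set.Ici n, coordAlg i] (shiftMap^[n]) := by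
  have e : (shiftMap^[n]) = fun ω i => ω (n + i) := funext (shiftMap_iterate n)
  rw [e]
  refine @measurable_pi_lambda _ _ _ (_) _ _ fun i => ?_
  refine Measurable.mono (comap_measurable _) ?_ le_rfl
  exact le_iSup₂_of_le (f := fun i (_ : i ∈ Set.Ici n) => coordAlg i)
    (n + i) (by simp) le_rfl

lemma iIndep_coordAlg {p : ℝ} [IsProbabilityMeasure (coin p)] :
    iIndep coordAlg (Measure.infinitePi (fun _ : ℕ => coin p)) :=
  iIndepFun_infinitePi (P := fun _ : ℕ => coin p) (X := fun _ x => x) (fun _ => measurable_id)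

/-- The Bernoulli shift is ergodic: an invariant event lies in the tail σ-algebra, so
Kolmogorov's zero-one law applies. -/
lemma ergodic_shiftMap {p : ℝ} [IsProbabilityMeasure (coin p)] :
    Ergodic shiftMap (Measure.infinitePi (fun _ : ℕ => coin p)) where
  measurable := measurable_shiftMap
  map_eq := Measure.map_infinitePi_infinitePi_of_inj (P := fun _ : ℕ => coin p)
    (f := fun i : ℕ => i + 1) (fun i j h => by simpa using h)
  aeconst_set := by
    intro s hs hinv
    have hlim : MeasurableSet[limsup coordAlg atTop] s := by
      rw [limsup_eq_iInf_iSup_of_nat, MeasurableSpace.measurableSet_iInf]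
      intro n
      have e : (shiftMap^[n]) ⁻¹' s = s := by
        rw [Set.preimage_iterate_eq]
        exact Function.iterate_fixed hinv n
      have := measurable_shiftMap_iterate_tail n hs
      rwa [e] at this
    rw [Filter.eventuallyConst_set']
    rcases measure_zero_or_one_of_measurableSet_limsup_atTop coordAlg_le
        (iIndep_coordAlg (p := p)) hlim
      with h | h
    · left; exact ae_eq_empty.2 h
    · right; exact ae_eq_univ.2 ((prob_compl_eq_zero_iff hs).2 h)

/-! ### Anti-concentration of the random walk -/

lemma charFun_coin_map {p : ℝ} (hp0 : 0 < p) (hp1 : p < 1) (s : Bool → ℝ) (t : ℝ) :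
    charFun ((coin p).map s) t =
      (p : ℂ) * Complex.exp (t * s false * Complex.I) +
        ((1 - p : ℝ) : ℂ) * Complex.exp (t * s true * Complex.I) := by
  rw [charFun_apply_real, integral_map (by fun_prop) (by fun_prop), coin,
    integral_add_measure ((integrable_dirac (by simp)).smul_measure (by simp))
      ((integrable_dirac (by simp)).smul_measure (by simp)), integral_smul_measure, integral_smul_measure,
    integral_dirac, integral_dirac, ENNReal.toReal_ofReal hp0.le,
    ENNReal.toReal_ofReal (by linarith), Complex.real_smul, Complex.real_smul]

lemma norm_charFun_coin_map_lt_one {p : ℝ} (hp0 : 0 < p) (hp1 : p < 1) (s : Bool → ℝ)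
    (hs : s false ≠ s true) :
    ∀ᵐ t ∂(gaussianReal 0 1), ‖charFun ((coin p).map s) t‖ < 1 := by
  have : NullSingletonClass (gaussianReal 0 1) := nullSingletonClass_gaussianReal one_ne_zero
  have hc : (Set.range fun n : ℤ => n * (2 * Real.pi) / (s false - s true)).Countable :=
    Set.countable_range _
  have h0 : ∀ᵐ t ∂(gaussianReal 0 1),
      t ∉ Set.range fun n : ℤ => n * (2 * Real.pi) / (s false - s true) :=
    hc.ae_notMem _
  filter_upwards [h0] with t ht
  rw [charFun_coin_map hp0 hp1]
  have hne : Complex.exp (t * s false * Complex.I) ≠ Complex.exp (t * s true * Complex.I) := by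
    intro h
    obtain ⟨n, hn⟩ := Complex.exp_eq_exp_iff_exists_int.1 h
    refine ht ⟨n, ?_⟩
    have h2 := congrArg Complex.im hn
    simp at h2
    have : s false - s true ≠ 0 := sub_ne_zero.2 hs
    simp only
    rw [div_eq_iff this]
    linarith
  have h1 : ∀ x : ℝ, ‖Complex.exp (t * x * Complex.I)‖ ≤ 1 := fun x => by
    rw [← Complex.ofReal_mul, Complex.norm_exp_ofReal_mul_I]
  have := norm_combo_lt_of_ne (h1 _) (h1 _) hne hp0 (show 0 < 1 - p by linarith) (by ring)
  simpa only [Complex.real_smul] using this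

/-- Gaussian averaging of characteristic functions turns `|φ(t)| < 1` for almost every `t` into
`𝔼 exp (-Sₙ² / 2) → 0` for the random walk `Sₙ`. -/
lemma tendsto_integral_gaussian_walk {p : ℝ} (hp0 : 0 < p) (hp1 : p < 1)
    [IsProbabilityMeasure (coin p)] (s : Bool → ℝ) (hs : s false ≠ s true) :
    Tendsto (fun n : ℕ => ∫ ω, Real.exp (-(∑ i ∈ Finset.range n, s (ω i)) ^ 2 / 2)
      ∂(Measure.infinitePi (fun _ : ℕ => coin p))) atTop (𝓝 0) := by
  set P := Measure.infinitePi (fun _ : ℕ => coin p) with hP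
  have hms : Measurable s := measurable_of_finite s
  have hmS : ∀ n, Measurable (fun ω : ℕ → Bool => ∑ i ∈ Finset.range n, s (ω i)) := fun n => by
    fun_prop
  have hchar : ∀ (n : ℕ) (t : ℝ),
      charFun (P.map (fun ω => ∑ i ∈ Finset.range n, s (ω i))) t =
        charFun ((coin p).map s) t ^ n := by
    intro n t
    have hind : iIndepFun (fun (i : ℕ) (ω : ℕ → Bool) => s (ω i)) P :=
      iIndepFun_infinitePi (P := fun _ : ℕ => coin p) (X := fun _ x => s x) (fun _ => hms)
    have h := iIndepFun.charFun_map_fun_finsetSum_eq_prod (s := Finset.range n)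
      (X := fun (i : ℕ) (ω : ℕ → Bool) => s (ω i)) (P := P)
      (fun i _ => (hms.comp (measurable_pi_apply i)).aemeasurable) (hind.restrict _)
    rw [h, Finset.prod_apply]
    have : ∀ i, P.map (fun ω : ℕ → Bool => s (ω i)) = (coin p).map s := by
      intro i
      rw [← Measure.infinitePi_map_eval (fun _ : ℕ => coin p) i,
        Measure.map_map hms (by fun_prop)]
      rfl
    simp [this]
  have key : ∀ n : ℕ, ((∫ ω, Real.exp (-(∑ i ∈ Finset.range n, s (ω i)) ^ 2 / 2) ∂P : ℝ) : ℂ) =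
      ∫ t, charFun ((coin p).map s) t ^ n ∂(gaussianReal 0 1) := by
    intro n
    rw [← integral_complex_ofReal]
    have h1 : ∀ ω : ℕ → Bool,
        ((Real.exp (-(∑ i ∈ Finset.range n, s (ω i)) ^ 2 / 2) : ℝ) : ℂ) =
        ∫ t, Complex.exp (((∑ i ∈ Finset.range n, s (ω i) : ℝ) : ℂ) * (t : ℝ) * Complex.I)
          ∂(gaussianReal 0 1) := by
      intro ω
      rw [← charFun_apply_real, charFun_gaussianReal]
      push_cast
      congr 1
      simp
      ring
    simp_rw [h1, ← hchar, charFun_apply_real]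
    rw [integral_integral_swap]
    · refine integral_congr_ae (.of_forall fun t => ?_)
      simp only
      rw [integral_map (hmS n).aemeasurable (by fun_prop)]
      refine integral_congr_ae (.of_forall fun ω => ?_)
      simp only
      congr 1; ring
    · refine Integrable.of_bound (C := 1) (Measurable.aestronglyMeasurable ?_) (.of_forall ?_)
      · unfold Function.uncurry
        have := (hmS n)
        fun_prop
      · rintro ⟨ω, t⟩
        simp only [Function.uncurry]
        rw [← Complex.ofReal_mul, Complex.norm_exp_ofReal_mul_I]
  have : IsProbabilityMeasure ((coin p).map s) := Measure.isProbabilityMeasure_map hms.aemeasurable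
  have hlim : Tendsto (fun n : ℕ => ∫ t, charFun ((coin p).map s) t ^ n ∂(gaussianReal 0 1))
      atTop (𝓝 0) := by
    have := tendsto_integral_of_dominated_convergence (μ := gaussianReal 0 1)
      (F := fun n t => charFun ((coin p).map s) t ^ n) (f := fun _ => (0 : ℂ))
      (fun _ => (1 : ℝ)) (fun n => (by fun_prop : Measurable _).aestronglyMeasurable)
      (integrable_const _)
      (fun n => .of_forall fun t => by
        rw [norm_pow]; exact pow_le_one₀ (norm_nonneg _) (norm_charFun_le_one _))
      (by
        filter_upwards [norm_charFun_coin_map_lt_one hp0 hp1 s hs] with t ht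
        exact tendsto_pow_atTop_nhds_zero_of_norm_lt_one ht)
    simpa using this
  simp_rw [← key] at hlim
  simpa [Function.comp_def] using (Complex.continuous_re.tendsto 0).comp hlim

/-- Anti-concentration: a nondegenerate two-valued random walk leaves every bounded interval
in probability. -/
lemma tendsto_measure_walk_bounded {p : ℝ} (hp0 : 0 < p) (hp1 : p < 1)
    [IsProbabilityMeasure (coin p)] (s : Bool → ℝ) (hs : s false ≠ s true) (M : ℝ) :
    Tendsto (fun n : ℕ => (Measure.infinitePi (fun _ : ℕ => coin p)).real
      {ω | |∑ i ∈ Finset.range n, s (ω i)| ≤ M}) atTop (𝓝 0) := by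
  set P := Measure.infinitePi (fun _ : ℕ => coin p) with hP
  have hms : Measurable s := measurable_of_finite s
  have h := (tendsto_integral_gaussian_walk hp0 hp1 s hs).const_mul (Real.exp (M ^ 2 / 2))
  rw [mul_zero] at h
  refine squeeze_zero (fun _ => measureReal_nonneg) (fun n => ?_) h
  have hint : Integrable (fun ω : ℕ → Bool =>
      Real.exp (-(∑ i ∈ Finset.range n, s (ω i)) ^ 2 / 2)) P := by
    refine Integrable.of_bound (C := 1) (by fun_prop : Measurable _).aestronglyMeasurable
      (.of_forall fun ω => ?_)
    rw [Real.norm_of_nonneg (Real.exp_pos _).le, Real.exp_le_one_iff]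
    nlinarith [sq_nonneg (∑ i ∈ Finset.range n, s (ω i))]
  have hm := mul_meas_ge_le_integral_of_nonneg (μ := P)
    (.of_forall fun ω => (Real.exp_pos (-(∑ i ∈ Finset.range n, s (ω i)) ^ 2 / 2)).le)
    hint (Real.exp (-M ^ 2 / 2))
  have hsub : P.real {ω | |∑ i ∈ Finset.range n, s (ω i)| ≤ M} ≤
      P.real {ω | Real.exp (-M ^ 2 / 2) ≤
        Real.exp (-(∑ i ∈ Finset.range n, s (ω i)) ^ 2 / 2)} := by
    refine measureReal_mono fun ω hω => ?_
    simp only [Set.mem_ofPred_eq] at hω ⊢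
    rw [Real.exp_le_exp]
    have := sq_le_sq' (abs_le.1 hω).1 (abs_le.1 hω).2
    linarith
  have hpos := Real.exp_pos (-M ^ 2 / 2)
  have hmul : Real.exp (M ^ 2 / 2) * Real.exp (-M ^ 2 / 2) = 1 := by
    rw [← Real.exp_add]; simp [neg_div]
  calc _ ≤ _ := hsub
    _ = Real.exp (M ^ 2 / 2) * (Real.exp (-M ^ 2 / 2) * P.real {ω | Real.exp (-M ^ 2 / 2) ≤
        Real.exp (-(∑ i ∈ Finset.range n, s (ω i)) ^ 2 / 2)}) := by
        rw [← mul_assoc, hmul, one_mul]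
    _ ≤ _ := mul_le_mul_of_nonneg_left hm (Real.exp_pos _).le

/-! ### The fibre dynamics -/

/-- The linear part of the generator with index `i`. -/
def fibreSlope (a b : ℝ) (i : Bool) : ℝ := if i then b else a

/-- The linear part of the `n`-fold fibre map. -/
noncomputable def fibreSlopeProd (a b : ℝ) (n : ℕ) (ω : ℕ → Bool) : ℝ :=
  ∏ i ∈ Finset.range n, fibreSlope a b (ω i)

/-- The real fibre orbit: `T_{ω_{n-1}} ∘ ⋯ ∘ T_{ω_0}` applied to `x : ℝ`. -/
noncomputable def orb (a b : ℝ) : ℕ → (ℕ → Bool) → ℝ → ℝ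
  | 0, _, x => x
  | n + 1, ω, x => fibreSlope a b (ω n) * orb a b n ω x + if ω n then 1 else 0

lemma orb_eq (a b : ℝ) (n : ℕ) (ω : ℕ → Bool) (x : ℝ) :
    orb a b n ω x = fibreSlopeProd a b n ω * x + orb a b n ω 0 := by
  induction n with
  | zero => simp [orb, fibreSlopeProd]
  | succ n ih =>
    have : fibreSlopeProd a b (n + 1) ω = fibreSlopeProd a b n ω * fibreSlope a b (ω n) := by
      simp [fibreSlopeProd, Finset.prod_range_succ]
    rw [orb, orb, ih, this]
    ring

lemma fibreSlope_pos {a b : ℝ} (ha : 0 < a) (hb : 0 < b) (i : Bool) : 0 < fibreSlope a b i := by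
  cases i <;> simpa [fibreSlope]

lemma fibreSlopeProd_pos {a b : ℝ} (ha : 0 < a) (hb : 0 < b) (n : ℕ) (ω : ℕ → Bool) :
    0 < fibreSlopeProd a b n ω :=
  Finset.prod_pos fun _ _ => fibreSlope_pos ha hb _

lemma orb_zero_nonneg {a b : ℝ} (ha : 0 < a) (hb : 0 < b) (n : ℕ) (ω : ℕ → Bool) :
    0 ≤ orb a b n ω 0 := by
  induction n with
  | zero => simp [orb]
  | succ n ih =>
    have := fibreSlope_pos ha hb (ω n)
    rw [orb]
    split_ifs <;> positivity

lemma log_fibreSlopeProd {a b : ℝ} (ha : 0 < a) (hb : 0 < b) (n : ℕ) (ω : ℕ → Bool) :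
    Real.log (fibreSlopeProd a b n ω) = ∑ i ∈ Finset.range n, Real.log (fibreSlope a b (ω i)) :=
  Real.log_prod fun _ _ => (fibreSlope_pos ha hb _).ne'

lemma Tmap_eq_top_iff (a b : ℝ) (ha : 0 < a) (hb : 0 < b) (i : Bool) (x : ℝ≥0∞) :
    Tmap a b i x = ⊤ ↔ x = ⊤ := by
  cases i <;> simp [Tmap, ENNReal.mul_eq_top, ha, hb]

lemma toReal_Tmap {a b : ℝ} (ha : 0 < a) (hb : 0 < b) (i : Bool) {x : ℝ≥0∞} (hx : x ≠ ⊤) :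
    (Tmap a b i x).toReal = fibreSlope a b i * x.toReal + if i then 1 else 0 := by
  cases i
  · simp [Tmap, fibreSlope, ha.le]
  · simp only [Tmap, fibreSlope, if_true]
    rw [ENNReal.toReal_add (ENNReal.mul_ne_top ENNReal.ofReal_ne_top hx) ENNReal.one_ne_top]
    simp [hb.le]

lemma skewMap_iterate_fst (a b : ℝ) (n : ℕ) (z : (ℕ → Bool) × ℝ≥0∞) :
    ((skewMap a b)^[n] z).1 = shiftMap^[n] z.1 := by
  induction n with
  | zero => rfl
  | succ n ih => rw [Function.iterate_succ_apply', Function.iterate_succ_apply', ← ih]; rfl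

lemma skewMap_iterate_snd {a b : ℝ} (ha : 0 < a) (hb : 0 < b) (n : ℕ)
    {z : (ℕ → Bool) × ℝ≥0∞} (hz : z.2 ≠ ⊤) :
    ((skewMap a b)^[n] z).2 ≠ ⊤ ∧ ((skewMap a b)^[n] z).2.toReal = orb a b n z.1 z.2.toReal := by
  induction n with
  | zero => exact ⟨hz, rfl⟩
  | succ n ih =>
    have h0 : ((skewMap a b)^[n] z).1 0 = z.1 n := by
      rw [skewMap_iterate_fst, shiftMap_iterate]; simp
    rw [Function.iterate_succ_apply', skewMap, h0]
    refine ⟨fun h => ih.1 ((Tmap_eq_top_iff a b ha hb _ _).1 h), ?_⟩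
    simp only
    rw [toReal_Tmap ha hb _ ih.1, ih.2, orb]

lemma measurable_fibreSlope_comp (a b : ℝ) {m : MeasurableSpace (ℕ → Bool)} {i : ℕ}
    (h : Measurable[m] fun ω : ℕ → Bool => ω i) :
    Measurable[m] fun ω : ℕ → Bool => fibreSlope a b (ω i) :=
  (measurable_of_finite (fibreSlope a b)).comp h

lemma measurable_fibreSlopeProd (a b : ℝ) (n : ℕ) : Measurable (fibreSlopeProd a b n) := by
  unfold fibreSlopeProd
  exact Finset.measurable_prod _ fun i _ => measurable_fibreSlope_comp a b (measurable_pi_apply i)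

lemma measurable_orb_zero_past (a b : ℝ) (n : ℕ) :
    Measurable[⨆ i ∈ Set.Iio n, coordAlg i] fun ω => orb a b n ω 0 := by
  induction n with
  | zero => exact measurable_const
  | succ n ih =>
    have hmono : (⨆ i ∈ Set.Iio n, coordAlg i) ≤ ⨆ i ∈ Set.Iio (n + 1), coordAlg i :=
      biSup_mono fun i hi => lt_trans hi (Nat.lt_succ_self n)
    have h1 : Measurable[⨆ i ∈ Set.Iio (n + 1), coordAlg i] fun ω : ℕ → Bool => ω n := by
      refine Measurable.mono (comap_measurable _) ?_ le_rfl
      exact le_iSup₂_of_le (f := fun i (_ : i ∈ Set.Iio (n + 1)) => coordAlg i) n (by simp) le_rfl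
    have h2 := measurable_fibreSlope_comp a b h1
    have h3 := Measurable.mono ih hmono le_rfl
    have h4 := (measurable_of_finite (fun i : Bool => if i then (1 : ℝ) else 0)).comp h1
    exact (h2.mul h3).add h4

lemma measurable_orb_zero (a b : ℝ) (n : ℕ) : Measurable fun ω => orb a b n ω 0 :=
  (measurable_orb_zero_past a b n).mono (iSup₂_le fun i _ => coordAlg_le i) le_rfl

/-- If an invariant measure lives on finite fibre coordinates, then the displacement
`T^n_ω x - T^n_ω 0 = fibreSlopeProd n ω * x` tends to `0` in measure: it is tight, being bounded by
`T^n_ω x`, whose law does not depend on `n`, while `log fibreSlopeProd` is an anti-concentrated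
random walk. -/
lemma tendsto_measure_displacement {a b p : ℝ} (ha : 0 < a) (hb : 0 < b) (hab : a ≠ b)
    (hp0 : 0 < p) (hp1 : p < 1) [IsProbabilityMeasure (coin p)]
    (κ : Measure ((ℕ → Bool) × ℝ≥0∞)) [IsFiniteMeasure κ]
    (hκ : MeasurePreserving (skewMap a b) κ κ) {c : ℝ≥0∞}
    (hmarg : κ.map Prod.fst = c • Measure.infinitePi (fun _ : ℕ => coin p))
    {ε : ℝ} (hε : 0 < ε) :
    Tendsto (fun n : ℕ => κ.real {z | ε < fibreSlopeProd a b n z.1 * z.2.toReal}) atTop (𝓝 0) := by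
  set P := Measure.infinitePi (fun _ : ℕ => coin p) with hP
  -- Fibre coordinates that are too large, or positive but too small.
  let B : ℕ → Set ((ℕ → Bool) × ℝ≥0∞) := fun N =>
    {z | (N + 1 : ℝ) < z.2.toReal} ∪ {z | 0 < z.2.toReal ∧ z.2.toReal < 1 / (N + 1 : ℝ)}
  have hx : Measurable fun z : (ℕ → Bool) × ℝ≥0∞ => z.2.toReal := measurable_snd.ennreal_toReal
  have hL : ∀ N : ℕ, MeasurableSet {z : (ℕ → Bool) × ℝ≥0∞ | (N + 1 : ℝ) < z.2.toReal} :=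
    fun N => measurableSet_lt measurable_const hx
  have hBm : ∀ N, MeasurableSet (B N) := fun N => (hL N).union
    ((measurableSet_lt measurable_const hx).inter (measurableSet_lt hx measurable_const))
  have hBanti : Antitone B := by
    intro N N' hN z hz
    have h1 : (N : ℝ) ≤ N' := by exact_mod_cast hN
    rcases hz with hz | ⟨h2, h3⟩
    · left; simp only [Set.mem_ofPred_eq] at hz ⊢; linarith
    · right
      exact ⟨h2, h3.trans_le (one_div_le_one_div_of_le (by positivity) (by linarith))⟩
  have hBempty : ⋂ N, B N = ∅ := by
    ext z
    simp only [Set.mem_iInter, Set.mem_empty_iff_false, iff_false, not_forall]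
    rcases (ENNReal.toReal_nonneg (a := z.2)).eq_or_lt with h | h
    · refine ⟨0, ?_⟩
      simp [B, ← h]
    · obtain ⟨N, hN⟩ := exists_nat_gt (max z.2.toReal (1 / z.2.toReal))
      have h1 := (le_max_left _ _).trans_lt hN
      have h2 := (le_max_right _ _).trans_lt hN
      refine ⟨N, ?_⟩
      rintro (h3 | ⟨-, h3⟩)
      · simp only [Set.mem_ofPred_eq] at h3; linarith
      · rw [lt_div_iff₀ (by positivity)] at h3
        rw [div_lt_iff₀ h] at h2
        nlinarith
  have hBlim : Tendsto (fun N => κ.real (B N)) atTop (𝓝 0) := by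
    have := tendsto_measure_iInter_atTop (μ := κ) (fun N => (hBm N).nullMeasurableSet) hBanti
      ⟨0, measure_ne_top _ _⟩
    rw [hBempty, measure_empty] at this
    simpa [Measure.real, Function.comp_def] using (ENNReal.tendsto_toReal ENNReal.zero_ne_top).comp this
  have hbound : ∀ N : ℕ, ∃ M : ℝ, ∀ n : ℕ,
      κ.real {z | ε < fibreSlopeProd a b n z.1 * z.2.toReal} ≤ 2 * κ.real (B N) +
        c.toReal * P.real {ω | |∑ i ∈ Finset.range n, Real.log (fibreSlope a b (ω i))| ≤ M} := by
    intro N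
    set K : ℝ := N + 1 with hK
    have hK0 : 0 < K := by positivity
    refine ⟨max |Real.log (ε / K)| |Real.log (K * K)|, fun n => ?_⟩
    set M := max |Real.log (ε / K)| |Real.log (K * K)|
    set W := {ω : ℕ → Bool | |∑ i ∈ Finset.range n, Real.log (fibreSlope a b (ω i))| ≤ M} with hW
    have hWm : MeasurableSet W := by
      refine measurableSet_le (Measurable.abs ?_) measurable_const
      exact Finset.measurable_sum _ fun i _ =>
        Real.measurable_log.comp (measurable_fibreSlope_comp a b (measurable_pi_apply i))
    have hsub : {z : (ℕ → Bool) × ℝ≥0∞ | ε < fibreSlopeProd a b n z.1 * z.2.toReal} ⊆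
        ((skewMap a b)^[n] ⁻¹' {z | K < z.2.toReal} ∪ B N) ∪ Prod.fst ⁻¹' W := by
      intro z hz
      simp only [Set.mem_ofPred_eq] at hz
      by_contra hcon
      simp only [Set.mem_union, not_or, Set.mem_preimage, Set.mem_ofPred_eq, B, not_lt,
        not_and, hW] at hcon
      obtain ⟨⟨h1, h2, h3⟩, h4⟩ := hcon
      apply h4
      have hA := fibreSlopeProd_pos ha hb n z.1
      have hx0 : 0 < z.2.toReal := by
        by_contra h
        have : z.2.toReal = 0 := le_antisymm (not_lt.1 h) ENNReal.toReal_nonneg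
        rw [this] at hz; linarith
      have htop : z.2 ≠ ⊤ := by
        intro h; simp [h] at hx0
      rw [(skewMap_iterate_snd ha hb n htop).2, orb_eq] at h1
      have h5 := orb_zero_nonneg ha hb n z.1
      have h3' := h3 hx0
      rw [div_le_iff₀ hK0] at h3'
      have hlow : ε / K ≤ fibreSlopeProd a b n z.1 := by
        rw [div_le_iff₀ hK0]
        nlinarith
      have hup : fibreSlopeProd a b n z.1 ≤ K * K := by
        nlinarith
      rw [← log_fibreSlopeProd ha hb]
      have h6 := Real.log_le_log (by positivity) hlow
      have h7 := Real.log_le_log hA hup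
      rw [abs_le]
      have h8 := neg_abs_le (Real.log (ε / K))
      have h9 := le_abs_self (Real.log (K * K))
      have h10 : |Real.log (ε / K)| ≤ M := le_max_left _ _
      have h11 : |Real.log (K * K)| ≤ M := le_max_right _ _
      constructor <;> linarith
    have e1 : κ.real ((skewMap a b)^[n] ⁻¹' {z | K < z.2.toReal}) ≤ κ.real (B N) := by
      rw [(hκ.iterate n).measureReal_preimage (hL N).nullMeasurableSet]
      exact measureReal_mono Set.subset_union_left
    have e2 : κ.real (Prod.fst ⁻¹' W) = c.toReal * P.real W := by
      rw [Measure.real, ← Measure.map_apply measurable_fst hWm, hmarg]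
      simp [Measure.real]
    calc _ ≤ κ.real (((skewMap a b)^[n] ⁻¹' {z | K < z.2.toReal} ∪ B N) ∪ Prod.fst ⁻¹' W) :=
          measureReal_mono hsub
      _ ≤ _ := measureReal_union_le _ _
      _ ≤ _ := add_le_add_left (measureReal_union_le _ _) _
      _ ≤ _ := by rw [e2]; linarith
  have hs : Real.log (fibreSlope a b false) ≠ Real.log (fibreSlope a b true) := by
    intro h
    exact hab (Real.log_injOn_pos (Set.mem_Ioi.2 ha) (Set.mem_Ioi.2 hb) (by simpa [fibreSlope] using h))
  rw [Metric.tendsto_atTop]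
  intro η hη
  obtain ⟨N, hN⟩ := (hBlim.eventually_lt_const (show 0 < η / 4 by linarith)).exists
  obtain ⟨M, hM⟩ := hbound N
  have hw := (tendsto_measure_walk_bounded hp0 hp1
    (fun i => Real.log (fibreSlope a b i)) hs M).const_mul c.toReal
  rw [mul_zero] at hw
  obtain ⟨n₀, hn₀⟩ := eventually_atTop.1 (hw.eventually_lt_const (show 0 < η / 4 by linarith))
  refine ⟨n₀, fun n hn => ?_⟩
  rw [Real.dist_0_eq_abs, abs_of_nonneg measureReal_nonneg]
  have := hn₀ n hn
  have := hM n
  linarith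

/-! ### Independence and characteristic functions -/

/-- The first `n` coordinates, through `T^n_ω 0`, are independent of the shifted sequence. -/
lemma integral_shift_mul_orb {p : ℝ} [IsProbabilityMeasure (coin p)] (a b : ℝ) (n : ℕ)
    {f : (ℕ → Bool) → ℂ} (hf : Measurable f) {g : ℝ → ℂ} (hg : Measurable g) :
    ∫ ω, f (shiftMap^[n] ω) * g (orb a b n ω 0) ∂Measure.infinitePi (fun _ : ℕ => coin p) =
      (∫ ω, f ω ∂Measure.infinitePi (fun _ : ℕ => coin p)) *
        ∫ ω, g (orb a b n ω 0) ∂Measure.infinitePi (fun _ : ℕ => coin p) := by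
  set P := Measure.infinitePi (fun _ : ℕ => coin p) with hP
  have hind : Indep (⨆ i ∈ Set.Ici n, coordAlg i) (⨆ i ∈ Set.Iio n, coordAlg i) P :=
    indep_iSup_of_disjoint coordAlg_le (iIndep_coordAlg (p := p))
      (Set.disjoint_left.2 fun i h1 h2 => absurd (Set.mem_Ici.1 h1) (not_le.2 h2))
  have hsh : MeasurePreserving (shiftMap^[n]) P P :=
    (ergodic_shiftMap (p := p)).toMeasurePreserving.iterate n
  have hX := hf.comp (measurable_shiftMap_iterate_tail n)
  have hY := hg.comp (measurable_orb_zero_past a b n)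
  have hXY : IndepFun (f ∘ shiftMap^[n]) (g ∘ fun ω => orb a b n ω 0) P :=
    indep_of_indep_of_le_left (indep_of_indep_of_le_right hind hY.comap_le) hX.comap_le
  have h := hXY.integral_fun_mul_eq_mul_integral
    (hf.comp hsh.measurable).aestronglyMeasurable
    (hg.comp (measurable_orb_zero a b n)).aestronglyMeasurable
  simp only [Function.comp_apply] at h
  rw [h]
  congr 1
  have h2 := integral_map (μ := P) hsh.measurable.aemeasurable (f := f)
    hf.aestronglyMeasurable
  rw [hsh.map_eq] at h2
  exact h2.symm

lemma norm_character_sub_le (t x y : ℝ) :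
    ‖Complex.exp (t * x * Complex.I) - Complex.exp (t * y * Complex.I)‖ ≤ |t| * |x - y| := by
  have h : Complex.exp (t * x * Complex.I) - Complex.exp (t * y * Complex.I) =
      Complex.exp ((t * y : ℝ) * Complex.I) *
        (Complex.exp (Complex.I * (t * (x - y) : ℝ)) - 1) := by
    rw [mul_sub, ← Complex.exp_add, mul_one]
    push_cast
    congr 2
    ring
  rw [h, norm_mul, Complex.norm_exp_ofReal_mul_I, one_mul]
  refine (Real.norm_exp_I_mul_ofReal_sub_one_le).trans ?_
  rw [Real.norm_eq_abs, abs_mul]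

lemma norm_character (t x : ℝ) : ‖Complex.exp (t * x * Complex.I)‖ = 1 := by
  rw [← Complex.ofReal_mul, Complex.norm_exp_ofReal_mul_I]

/-- On the finite part the conditional characteristic function of the fibre coordinate does not
depend on the base: by invariance the left side equals the integral of
`1_S(σ^n ω) exp(i t T^n_ω x)`; replacing `x` by `0` costs `o(1)` and makes the two factors
independent. -/
lemma integral_indicator_character {a b p : ℝ} (ha : 0 < a) (hb : 0 < b) (hab : a ≠ b)
    (hp0 : 0 < p) (hp1 : p < 1) [IsProbabilityMeasure (coin p)]
    (κ : Measure ((ℕ → Bool) × ℝ≥0∞)) [IsFiniteMeasure κ]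
    (hκ : MeasurePreserving (skewMap a b) κ κ) (hfin : ∀ᵐ z ∂κ, z.2 ≠ ⊤) {c : ℝ≥0∞}
    (hmarg : κ.map Prod.fst = c • Measure.infinitePi (fun _ : ℕ => coin p))
    {S : Set (ℕ → Bool)} (hS : MeasurableSet S) (t : ℝ) :
    ∫ z, S.indicator (fun _ => (1 : ℂ)) z.1 * Complex.exp (t * z.2.toReal * Complex.I) ∂κ =
      (Measure.infinitePi (fun _ : ℕ => coin p)).real S *
        ∫ z, Complex.exp (t * (z.2.toReal : ℝ) * Complex.I) ∂κ := by
  set P := Measure.infinitePi (fun _ : ℕ => coin p) with hP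
  set d : ℕ → ℂ := fun n => ∫ ω, Complex.exp (t * (orb a b n ω 0 : ℝ) * Complex.I) ∂P with hd
  have hx : Measurable fun z : (ℕ → Bool) × ℝ≥0∞ => z.2.toReal := measurable_snd.ennreal_toReal
  have hind : ∀ {S : Set (ℕ → Bool)}, MeasurableSet S →
      Measurable (S.indicator (fun _ => (1 : ℂ))) := fun hS => measurable_const.indicator hS
  have hg : Measurable fun x : ℝ => Complex.exp (t * x * Complex.I) := by fun_prop
  have key : ∀ {S : Set (ℕ → Bool)}, MeasurableSet S →
      Tendsto (fun n => (c.toReal : ℂ) * (P.real S * d n)) atTop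
        (𝓝 (∫ z, S.indicator (fun _ => (1 : ℂ)) z.1 *
          Complex.exp (t * z.2.toReal * Complex.I) ∂κ)) := by
    intro S hS
    have hone : ∀ ω, ‖S.indicator (fun _ => (1 : ℂ)) ω‖ ≤ 1 := fun ω => by
      by_cases h : ω ∈ S <;> simp [h]
    have hI : ∀ n, ∫ z, S.indicator (fun _ => (1 : ℂ)) z.1 *
          Complex.exp (t * z.2.toReal * Complex.I) ∂κ =
        ∫ z, S.indicator (fun _ => (1 : ℂ)) (shiftMap^[n] z.1) *
          Complex.exp (t * (orb a b n z.1 z.2.toReal : ℝ) * Complex.I) ∂κ := by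
      intro n
      have h := integral_map (μ := κ) (hκ.iterate n).measurable.aemeasurable
        (f := fun z : (ℕ → Bool) × ℝ≥0∞ => S.indicator (fun _ => (1 : ℂ)) z.1 *
          Complex.exp (t * z.2.toReal * Complex.I))
        (((hind hS).comp measurable_fst).mul (hg.comp hx)).aestronglyMeasurable
      rw [(hκ.iterate n).map_eq] at h
      rw [h]
      refine integral_congr_ae ?_
      filter_upwards [hfin] with z hz
      rw [skewMap_iterate_fst, (skewMap_iterate_snd ha hb n hz).2]
    have hJ : ∀ n, ∫ z, S.indicator (fun _ => (1 : ℂ)) (shiftMap^[n] z.1) *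
          Complex.exp (t * (orb a b n z.1 0 : ℝ) * Complex.I) ∂κ =
        (c.toReal : ℂ) * (P.real S * d n) := by
      intro n
      have hm : Measurable fun ω => S.indicator (fun _ => (1 : ℂ)) (shiftMap^[n] ω) *
          Complex.exp (t * (orb a b n ω 0 : ℝ) * Complex.I) :=
        ((hind hS).comp (measurable_shiftMap.iterate n)).mul (hg.comp (measurable_orb_zero a b n))
      have h := integral_map (μ := κ) measurable_fst.aemeasurable
        (f := fun ω => S.indicator (fun _ => (1 : ℂ)) (shiftMap^[n] ω) *
          Complex.exp (t * (orb a b n ω 0 : ℝ) * Complex.I)) hm.aestronglyMeasurable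
      rw [← h, hmarg, integral_smul_measure, integral_shift_mul_orb a b n (hind hS) hg,
        integral_indicator_const _ hS]
      simp [hd, hP]
    rw [tendsto_iff_norm_sub_tendsto_zero, Metric.tendsto_atTop]
    intro η hη
    set m := κ.real Set.univ with hm
    have hm0 : 0 ≤ m := measureReal_nonneg
    set ε := η / (2 * (m + 1)) with hε
    have hε0 : 0 < ε := by positivity
    set δ := ε / (|t| + 1) with hδ
    have hδ0 : 0 < δ := by positivity
    have hlim := tendsto_measure_displacement ha hb hab hp0 hp1 κ hκ hmarg hδ0
    obtain ⟨n₀, hn₀⟩ := eventually_atTop.1 (hlim.eventually_lt_const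
      (show 0 < η / 4 by linarith))
    refine ⟨n₀, fun n hn => ?_⟩
    rw [Real.dist_0_eq_abs, abs_norm, norm_sub_rev, hI n, ← hJ n]
    set D := {z : (ℕ → Bool) × ℝ≥0∞ | δ < fibreSlopeProd a b n z.1 * z.2.toReal} with hD
    have hDm : MeasurableSet D := measurableSet_lt measurable_const
      (((measurable_fibreSlopeProd a b n).comp measurable_fst).mul hx)
    have horb : Measurable fun z : (ℕ → Bool) × ℝ≥0∞ => orb a b n z.1 z.2.toReal := by
      have : (fun z : (ℕ → Bool) × ℝ≥0∞ => orb a b n z.1 z.2.toReal) = fun z =>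
          fibreSlopeProd a b n z.1 * z.2.toReal + orb a b n z.1 0 := funext fun z => orb_eq ..
      rw [this]
      exact (((measurable_fibreSlopeProd a b n).comp measurable_fst).mul hx).add
        ((measurable_orb_zero a b n).comp measurable_fst)
    have hσ : Measurable fun z : (ℕ → Bool) × ℝ≥0∞ =>
        S.indicator (fun _ => (1 : ℂ)) (shiftMap^[n] z.1) :=
      (hind hS).comp ((measurable_shiftMap.iterate n).comp measurable_fst)
    rw [← integral_sub]
    rotate_left
    · refine Integrable.of_bound (C := 1) (hσ.mul (hg.comp horb)).aestronglyMeasurable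
        (.of_forall fun z => ?_)
      rw [norm_mul, norm_character, mul_one]
      exact hone _
    · refine Integrable.of_bound (C := 1)
        (hσ.mul (hg.comp ((measurable_orb_zero a b n).comp measurable_fst))).aestronglyMeasurable
        (.of_forall fun z => ?_)
      rw [norm_mul, norm_character, mul_one]
      exact hone _
    have hpt : ∀ z : (ℕ → Bool) × ℝ≥0∞,
        ‖S.indicator (fun _ => (1 : ℂ)) (shiftMap^[n] z.1) *
          Complex.exp (t * (orb a b n z.1 z.2.toReal : ℝ) * Complex.I) -
        S.indicator (fun _ => (1 : ℂ)) (shiftMap^[n] z.1) *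
          Complex.exp (t * (orb a b n z.1 0 : ℝ) * Complex.I)‖ ≤
        ε + D.indicator (fun _ => (2 : ℝ)) z := by
      intro z
      rw [← mul_sub, norm_mul]
      refine (mul_le_of_le_one_left (norm_nonneg _) (hone _)).trans ?_
      by_cases hz : z ∈ D
      · rw [Set.indicator_of_mem hz]
        refine (norm_sub_le _ _).trans ?_
        rw [norm_character, norm_character]
        linarith
      · rw [Set.indicator_of_notMem hz, add_zero]
        refine (norm_character_sub_le _ _ _).trans ?_
        have h1 : fibreSlopeProd a b n z.1 * z.2.toReal ≤ δ := not_lt.1 hz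
        have h2 : 0 ≤ fibreSlopeProd a b n z.1 * z.2.toReal :=
          mul_nonneg (fibreSlopeProd_pos ha hb n z.1).le ENNReal.toReal_nonneg
        rw [orb_eq, add_sub_cancel_right, abs_of_nonneg h2]
        rw [hδ, le_div_iff₀ (by positivity)] at h1
        linarith
    calc _ ≤ ∫ z, ε + D.indicator (fun _ => (2 : ℝ)) z ∂κ :=
          norm_integral_le_of_norm_le
            ((integrable_const _).add ((integrable_const _).indicator hDm)) (.of_forall hpt)
      _ = ε * m + 2 * κ.real D := by
          rw [integral_add (integrable_const _) ((integrable_const _).indicator hDm),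
            integral_const, integral_indicator_const _ hDm, smul_eq_mul, smul_eq_mul]
          ring
      _ < η := by
          have h1 := hn₀ n hn
          have h2 : ε * m ≤ η / 2 := by
            have : ε * (2 * (m + 1)) = η := div_mul_cancel₀ _ (by positivity)
            nlinarith
          linarith
  have h1 := key hS
  have h2 := (key MeasurableSet.univ).const_mul (P.real S : ℂ)
  simp only [Set.indicator_univ, one_mul, probReal_univ, Complex.ofReal_one] at h2
  refine tendsto_nhds_unique h1 (h2.congr fun n => ?_)
  ring

/-! ### Product structure -/

/-- By ergodicity of the base, every invariant event splits off a multiple of the base measure. -/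
lemma map_fst_restrict {a b p : ℝ} [IsProbabilityMeasure (coin p)]
    (κ : Measure ((ℕ → Bool) × ℝ≥0∞)) [IsProbabilityMeasure κ]
    (hκ : MeasurePreserving (skewMap a b) κ κ)
    (hmarg : κ.map Prod.fst = Measure.infinitePi (fun _ : ℕ => coin p))
    {E : Set ((ℕ → Bool) × ℝ≥0∞)} (hE : MeasurableSet E) (hinv : skewMap a b ⁻¹' E = E) :
    (κ.restrict E).map Prod.fst = κ E • Measure.infinitePi (fun _ : ℕ => coin p) := by
  set P := Measure.infinitePi (fun _ : ℕ => coin p) with hP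
  have hres : MeasurePreserving (skewMap a b) (κ.restrict E) (κ.restrict E) := by
    have := hκ.restrict_preimage hE
    rwa [hinv] at this
  have hpres : MeasurePreserving shiftMap ((κ.restrict E).map Prod.fst)
      ((κ.restrict E).map Prod.fst) := by
    refine ⟨measurable_shiftMap, ?_⟩
    rw [Measure.map_map measurable_shiftMap measurable_fst]
    conv_rhs => rw [← hres.map_eq, Measure.map_map measurable_fst hκ.measurable]
    rfl
  have hac : (κ.restrict E).map Prod.fst ≪ P := by
    rw [← hmarg]
    exact Measure.AbsolutelyContinuous.map Measure.restrict_le_self.absolutelyContinuous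
      measurable_fst
  obtain ⟨c, hc⟩ := (ergodic_shiftMap (p := p)).eq_smul_of_absolutelyContinuous hpres hac
  have hcE : κ E = c := by
    have h := congrArg (fun m : Measure (ℕ → Bool) => m Set.univ) hc
    simpa [Measure.map_apply measurable_fst MeasurableSet.univ] using h
  rw [hc, hcE]

/-- On the finite part, rectangles have product measure. -/
lemma measure_rectangle_of_finite {a b p : ℝ} (ha : 0 < a) (hb : 0 < b) (hab : a ≠ b)
    (hp0 : 0 < p) (hp1 : p < 1) [IsProbabilityMeasure (coin p)]
    (κ : Measure ((ℕ → Bool) × ℝ≥0∞)) [IsFiniteMeasure κ]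
    (hκ : MeasurePreserving (skewMap a b) κ κ) (hfin : ∀ᵐ z ∂κ, z.2 ≠ ⊤) {c : ℝ≥0∞}
    (hmarg : κ.map Prod.fst = c • Measure.infinitePi (fun _ : ℕ => coin p))
    {S : Set (ℕ → Bool)} (hS : MeasurableSet S) {B : Set ℝ≥0∞} (hB : MeasurableSet B) :
    κ (S ×ˢ B) = Measure.infinitePi (fun _ : ℕ => coin p) S * κ (Set.univ ×ˢ B) := by
  set P := Measure.infinitePi (fun _ : ℕ => coin p) with hP
  have hx : Measurable fun z : (ℕ → Bool) × ℝ≥0∞ => z.2.toReal := measurable_snd.ennreal_toReal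
  have hS' : MeasurableSet (Prod.fst ⁻¹' S : Set ((ℕ → Bool) × ℝ≥0∞)) := measurable_fst hS
  have hPS : P S • κ.map (fun z => z.2.toReal) = (P S).toNNReal • κ.map (fun z => z.2.toReal) := by
    rw [← ENNReal.coe_toNNReal (measure_ne_top P S)]
    rfl
  have hext : (κ.restrict (Prod.fst ⁻¹' S)).map (fun z => z.2.toReal) =
      P S • κ.map (fun z => z.2.toReal) := by
    rw [hPS]
    refine Measure.ext_of_charFun (funext fun t => ?_)
    rw [← hPS]
    have hc : ∀ m : Measure ((ℕ → Bool) × ℝ≥0∞),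
        ∫ x, Complex.exp (t * x * Complex.I) ∂(m.map (fun z => z.2.toReal)) =
          ∫ z, Complex.exp (t * (z.2.toReal : ℝ) * Complex.I) ∂m := fun m =>
      integral_map hx.aemeasurable (by fun_prop)
    rw [charFun_apply_real, charFun_apply_real, integral_smul_measure, hc, hc]
    have h := integral_indicator_character ha hb hab hp0 hp1 κ hκ hfin hmarg hS t
    rw [Complex.real_smul]
    refine Eq.trans ?_ h
    rw [← integral_indicator hS']
    refine integral_congr_ae (.of_forall fun z => ?_)
    by_cases hz : z.1 ∈ S
    · simp [Set.indicator, hz]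
    · simp [Set.indicator, hz]
  have hB' : MeasurableSet (ENNReal.ofReal ⁻¹' B) := ENNReal.measurable_ofReal hB
  have h := congrArg (fun m : Measure ℝ => m (ENNReal.ofReal ⁻¹' B)) hext
  simp only [Measure.smul_apply, smul_eq_mul] at h
  rw [Measure.map_apply hx hB', Measure.map_apply hx hB',
    Measure.restrict_apply (hx hB')] at h
  have e1 : κ (S ×ˢ B) =
      κ ((fun z => z.2.toReal) ⁻¹' (ENNReal.ofReal ⁻¹' B) ∩ Prod.fst ⁻¹' S) := by
    refine measure_congr (Filter.eventuallyEq_set.2 ?_)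
    filter_upwards [hfin] with z hz
    simp [Set.mem_prod, ENNReal.ofReal_toReal hz, and_comm]
  have e2 : κ (Set.univ ×ˢ B) = κ ((fun z => z.2.toReal) ⁻¹' (ENNReal.ofReal ⁻¹' B)) := by
    refine measure_congr (Filter.eventuallyEq_set.2 ?_)
    filter_upwards [hfin] with z hz
    simp [Set.mem_prod, ENNReal.ofReal_toReal hz]
  rw [e1, e2, h]

/-- **Proposition 6.1.** Let `ν` be the `(p, 1−p)` Bernoulli product measure on `Σ`
(characterized by its values on cylinders: each coordinate is independently `0` with
probability `p` and `1` with probability `1−p`). If a `τ`-invariant probability measure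
`κ` on `Σ × ℝ̄₊` has marginal `ν` on `Σ`, then `κ = ν × μ` for some probability
measure `μ` on `ℝ̄₊`. -/
theorem bernoulli_product_structure (a b p : ℝ) (ha : 0 < a) (ha1 : a < 1) (hb : 1 < b)
    (hp0 : 0 < p) (hp1 : p < 1)
    (ν : Measure (ℕ → Bool)) [IsProbabilityMeasure ν]
    (hν : ∀ (n : ℕ) (w : Fin n → Bool),
      ν {ωb : ℕ → Bool | ∀ i : Fin n, ωb ↑i = w i} =
        ∏ i : Fin n, (if w i then ENNReal.ofReal (1 - p) else ENNReal.ofReal p))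
    (κ : Measure ((ℕ → Bool) × ℝ≥0∞)) [IsProbabilityMeasure κ]
    (hκ : MeasurePreserving (skewMap a b) κ κ)
    (hmarg : κ.map Prod.fst = ν) :
    ∃ μ : Measure ℝ≥0∞, IsProbabilityMeasure μ ∧ κ = ν.prod μ := by
  have hb0 : 0 < b := by linarith
  have hcoin := isProbabilityMeasure_coin hp0 hp1
  have hνP := eq_infinitePi_coin ν hν
  subst hνP
  set P := Measure.infinitePi (fun _ : ℕ => coin p) with hP
  set E : Set ((ℕ → Bool) × ℝ≥0∞) := {z | z.2 ≠ ⊤} with hEdef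
  have hE : MeasurableSet E := measurable_snd (MeasurableSet.singleton (⊤ : ℝ≥0∞)).compl
  have hinv : skewMap a b ⁻¹' E = E := by
    ext z
    exact not_congr (Tmap_eq_top_iff a b ha hb0 _ _)
  have hres : MeasurePreserving (skewMap a b) (κ.restrict E) (κ.restrict E) := by
    have := hκ.restrict_preimage hE
    rwa [hinv] at this
  have hfinpart : ∀ {S : Set (ℕ → Bool)}, MeasurableSet S → ∀ {B : Set ℝ≥0∞}, MeasurableSet B →
      κ.restrict E (S ×ˢ B) = P S * κ.restrict E (Set.univ ×ˢ B) := fun hS _ hB =>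
    measure_rectangle_of_finite ha hb0 (by linarith) hp0 hp1 (κ.restrict E) hres
      (ae_restrict_mem hE) (map_fst_restrict κ hκ hmarg hE hinv) hS hB
  have hinfpart : ∀ {S : Set (ℕ → Bool)}, MeasurableSet S → ∀ {B : Set ℝ≥0∞}, MeasurableSet B →
      κ.restrict Eᶜ (S ×ˢ B) = P S * κ.restrict Eᶜ (Set.univ ×ˢ B) := by
    intro S hS B hB
    have hm := map_fst_restrict κ hκ hmarg hE.compl (by rw [Set.preimage_compl, hinv])
    have hSm : κ.restrict Eᶜ (Prod.fst ⁻¹' S) = κ Eᶜ * P S := by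
      rw [← Measure.map_apply measurable_fst hS, hm]; rfl
    have hae : ∀ᵐ z ∂(κ.restrict Eᶜ), z.2 = ⊤ := by
      filter_upwards [ae_restrict_mem hE.compl] with z hz
      simpa [hEdef] using hz
    by_cases htop : ⊤ ∈ B
    · have e : ∀ S : Set (ℕ → Bool), κ.restrict Eᶜ (S ×ˢ B) =
          κ.restrict Eᶜ (Prod.fst ⁻¹' S) := by
        intro S
        refine measure_congr (Filter.eventuallyEq_set.2 ?_)
        filter_upwards [hae] with z hz
        simp [Set.mem_prod, hz, htop]
      rw [e, e, hSm, Set.preimage_univ, Measure.restrict_apply_univ, mul_comm]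
    · have e : ∀ S : Set (ℕ → Bool), κ.restrict Eᶜ (S ×ˢ B) = 0 := by
        intro S
        refine measure_eq_zero_iff_ae_notMem.2 ?_
        filter_upwards [hae] with z hz
        simp [Set.mem_prod, hz, htop]
      rw [e, e, mul_zero]
  refine ⟨κ.map Prod.snd, Measure.isProbabilityMeasure_map measurable_snd.aemeasurable, ?_⟩
  have := Measure.isProbabilityMeasure_map (μ := κ) measurable_snd.aemeasurable
  refine (Measure.prod_eq fun S B hS hB => ?_).symm
  rw [Measure.map_apply measurable_snd hB, ← Set.univ_prod]
  have hsplit : ∀ A, κ A = κ.restrict E A + κ.restrict Eᶜ A := fun A => by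
    rw [← Measure.add_apply, Measure.restrict_add_restrict_compl hE]
  rw [hsplit, hsplit (Set.univ ×ˢ B), hfinpart hS hB, hinfpart hS hB, mul_add]
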